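/- Let n ≥ 1 be a natural number and let N and ξ₁ be real numbers with 0 < ξ₁ < N. Then the principal value integral T_{2n,N}(ξ₁) = p.v.∫_{-N}^{N} t^{2n}/(ξ₁² - t²) dt exists and equals P_{2n-1}(N, ξ₁) + ξ₁^{2n-1} · ln((N + ξ₁)/(N - ξ₁)), where P_{2n-1}(N, ξ₁) = -∑_{j=1}^{n} (2/(2j-1)) · N^{2j-1} · ξ₁^{2(n-j)} is a polynomial of degree 2n-1 in the variables N, ξ₁. (This is the paper's general evaluation of T_{2n,N}, with the polynomial P_{2n-1} made explicit.) -/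

import Mathlib

open MeasureTheory Filter Set

/-!
Off `{ξ₁, -ξ₁}` the integrand has the odd primitive
`F t = (P_{2n-1}(t, ξ₁) + ξ₁^(2n-1) (log |t + ξ₁| - log |t - ξ₁|)) / 2`: the polynomial part
integrates the geometric sum `(t^(2n) - ξ₁^(2n)) / (ξ₁² - t²)`, the logarithms integrate
`ξ₁^(2n) / (ξ₁² - t²)`. Deleting `(s - ε, s + ε)` around a singularity `s` costs
`F (s + ε) - F (s - ε)`. The logarithm of an absolute value is even, so its divergent contributions
on the two sides of `s` cancel and this cost tends to `0`; the principal value is therefore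
`F N - F (-N) = 2 F N`.
-/

section SymmContinuous

variable {E : Type*} [AddCommGroup E] [TopologicalSpace E] {F G : ℝ → E} {s : ℝ}

/-- Symmetric continuity of `F` at `s`, i.e. `F (s + ε) - F (s - ε) → 0` as `ε → 0`. This is the
condition on a primitive under which a singularity of the integrand at `s` contributes nothing to
the principal value. As the difference is odd in `ε`, only `ε > 0` is considered. -/
def SymmContinuousAt (F : ℝ → E) (s : ℝ) : Prop :=
  Tendsto (fun ε ↦ F (s + ε) - F (s - ε)) (nhdsWithin 0 (Ioi 0)) (nhds 0)

namespace SymmContinuousAt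

lemma const_smul {M : Type*} [DistribSMul M E] [ContinuousConstSMul M E]
    (hF : SymmContinuousAt F s) (c : M) : SymmContinuousAt (fun t ↦ c • F t) s := by
  simpa only [SymmContinuousAt, smul_sub, smul_zero] using Tendsto.const_smul hF c

variable [IsTopologicalAddGroup E]

lemma of_continuousAt (hF : ContinuousAt F s) : SymmContinuousAt F s := by
  have hadd : Tendsto (fun ε : ℝ ↦ F (s + ε)) (nhds 0) (nhds (F s)) :=
    hF.tendsto.comp (Continuous.tendsto' (by fun_prop) _ _ (add_zero s))
  have hsub : Tendsto (fun ε : ℝ ↦ F (s - ε)) (nhds 0) (nhds (F s)) :=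
    hF.tendsto.comp (Continuous.tendsto' (by fun_prop) _ _ (sub_zero s))
  simpa only [SymmContinuousAt, sub_self] using (hadd.sub hsub).mono_left nhdsWithin_le_nhds

lemma add (hF : SymmContinuousAt F s) (hG : SymmContinuousAt G s) :
    SymmContinuousAt (fun t ↦ F t + G t) s := by
  simpa only [SymmContinuousAt, add_sub_add_comm, add_zero] using Tendsto.add hF hG

lemma sub (hF : SymmContinuousAt F s) (hG : SymmContinuousAt G s) :
    SymmContinuousAt (fun t ↦ F t - G t) s := by
  simpa only [SymmContinuousAt, sub_sub_sub_comm, sub_zero] using Tendsto.sub hF hG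

end SymmContinuousAt

lemma symmContinuousAt_log_sub (c s : ℝ) : SymmContinuousAt (fun t ↦ Real.log (t - c)) s := by
  obtain rfl | hsc := eq_or_ne s c
  · refine tendsto_const_nhds.congr fun ε ↦ ?_
    beta_reduce
    rw [add_sub_cancel_left, sub_sub_cancel_left, Real.log_neg_eq_log, sub_self]
  · exact .of_continuousAt (ContinuousAt.log (by fun_prop) (sub_ne_zero.2 hsc))

end SymmContinuous

section PrincipalValue

open Metric

variable {E : Type*} [NormedAddCommGroup E] [NormedSpace ℝ E] {f F : ℝ → E} {S T : Set ℝ}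
  {a b c d s : ℝ} {v w : E}

/-- `v` is the Cauchy principal value of `∫ t in a..b, f t` with singularities in `S`: the integrals
of `f` outside the `ε`-neighbourhood of `S` tend to `v` as `ε → 0+`. Integrability outside these
neighbourhoods is part of the definition, since the integral of a non-integrable function is `0`. -/
def HasPrincipalValue (f : ℝ → E) (S : Set ℝ) (a b : ℝ) (v : E) : Prop :=
  (∀ᶠ ε in nhdsWithin 0 (Ioi 0),
    IntervalIntegrable ((thickening ε S)ᶜ.indicator f) volume a b) ∧
  Tendsto (fun ε ↦ ∫ t in a..b, (thickening ε S)ᶜ.indicator f t) (nhdsWithin 0 (Ioi 0)) (nhds v)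

lemma hasPrincipalValue_empty (hf : IntervalIntegrable f volume a b) :
    HasPrincipalValue f ∅ a b (∫ t in a..b, f t) := by
  simpa [HasPrincipalValue] using hf

lemma HasPrincipalValue.add_adjacent (hab : HasPrincipalValue f S a b v)
    (hbc : HasPrincipalValue f S b c w) : HasPrincipalValue f S a c (v + w) := by
  refine ⟨(hab.1.and hbc.1).mono fun ε h ↦ h.1.trans h.2, (hab.2.add hbc.2).congr' ?_⟩
  filter_upwards [hab.1, hbc.1] with ε hab' hbc'
  exact intervalIntegral.integral_add_adjacent_intervals hab' hbc'

lemma eventually_disjoint_thickening {X : Type*} [PseudoEMetricSpace X] {K C : Set X}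
    (hK : IsCompact K) (hC : IsClosed C) (hKC : Disjoint K C) :
    ∀ᶠ ε : ℝ in nhdsWithin 0 (Ioi 0), Disjoint K (thickening ε C) := by
  obtain ⟨δ, hδ, hδKC⟩ := hKC.exists_thickenings hK hC
  filter_upwards [Ioo_mem_nhdsGT hδ] with ε hε
  exact hδKC.mono (self_subset_thickening hδ K) (thickening_mono hε.2.le C)

lemma HasPrincipalValue.union_of_disjoint (h : HasPrincipalValue f S a b v) (hT : IsClosed T)
    (hd : Disjoint (uIcc a b) T) : HasPrincipalValue f (S ∪ T) a b v := by
  have heq : ∀ᶠ ε in nhdsWithin 0 (Ioi 0), EqOn ((thickening ε S)ᶜ.indicator f)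
      ((thickening ε (S ∪ T))ᶜ.indicator f) (uIcc a b) := by
    filter_upwards [eventually_disjoint_thickening isCompact_uIcc hT hd] with ε hε t ht
    have htT : t ∉ thickening ε T := disjoint_left.1 hε ht
    classical
    simp only [indicator_apply, thickening_union, mem_compl_iff, mem_union, htT, or_false]
  refine ⟨?_, h.2.congr' ?_⟩
  · filter_upwards [h.1, heq] with ε hint hε
    exact hint.congr (hε.mono uIoc_subset_uIcc)
  · filter_upwards [heq] with ε hε
    exact intervalIntegral.integral_congr hε

lemma HasPrincipalValue.tendsto_setIntegral_Ioo_sdiff (h : HasPrincipalValue f S a b v)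
    (hab : a ≤ b) :
    Tendsto (fun ε ↦ ∫ t in Ioo a b \ thickening ε S, f t) (nhdsWithin 0 (Ioi 0)) (nhds v) := by
  refine h.2.congr fun ε ↦ ?_
  rw [intervalIntegral.integral_of_le hab, integral_Ioc_eq_integral_Ioo,
    setIntegral_indicator isOpen_thickening.measurableSet.compl, sdiff_eq]

lemma intervalIntegrable_and_integral_indicator_compl_Ioo (hac : a ≤ c) (hcd : c ≤ d) (hdb : d ≤ b)
    (hfac : IntervalIntegrable f volume a c) (hfdb : IntervalIntegrable f volume d b) :
    IntervalIntegrable ((Ioo c d)ᶜ.indicator f) volume a b ∧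
      ∫ t in a..b, (Ioo c d)ᶜ.indicator f t = (∫ t in a..c, f t) + ∫ t in d..b, f t := by
  set g := (Ioo c d)ᶜ.indicator f
  have hleft : EqOn f g (uIoo a c) := by
    rw [uIoo_of_le hac]
    exact (eqOn_indicator.mono fun t ht h ↦ ht.2.not_gt h.1).symm
  have hmid : EqOn (fun _ ↦ 0) g (uIoo c d) := by
    rw [uIoo_of_le hcd]
    exact fun t ht ↦ (indicator_of_notMem (notMem_compl_iff.2 ht) f).symm
  have hright : EqOn f g (uIoo d b) := by
    rw [uIoo_of_le hdb]
    exact (eqOn_indicator.mono fun t ht h ↦ ht.1.not_gt h.2).symm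
  have hgac : IntervalIntegrable g volume a c := hfac.congr_uIoo hleft
  have hgcd : IntervalIntegrable g volume c d := IntervalIntegrable.zero.congr_uIoo hmid
  have hgdb : IntervalIntegrable g volume d b := hfdb.congr_uIoo hright
  refine ⟨(hgac.trans hgcd).trans hgdb, ?_⟩
  rw [← intervalIntegral.integral_add_adjacent_intervals (hgac.trans hgcd) hgdb,
    ← intervalIntegral.integral_add_adjacent_intervals hgac hgcd,
    ← intervalIntegral.integral_congr_uIoo hleft, ← intervalIntegral.integral_congr_uIoo hmid,
    ← intervalIntegral.integral_congr_uIoo hright, intervalIntegral.integral_zero, add_zero]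

variable [CompleteSpace E]

lemma intervalIntegrable_and_integral_eq_sub_of_hasDerivAt (hab : a ≤ b)
    (hf : LocallyIntegrableOn f (Icc a b)) (hderiv : ∀ t ∈ Icc a b, HasDerivAt F (f t) t) :
    IntervalIntegrable f volume a b ∧ ∫ t in a..b, f t = F b - F a := by
  have hint : IntervalIntegrable f volume a b :=
    (intervalIntegrable_iff_integrableOn_Icc_of_le hab).2 (hf.integrableOn_isCompact isCompact_Icc)
  rw [← uIcc_of_le hab] at hderiv
  exact ⟨hint, intervalIntegral.integral_eq_sub_of_hasDerivAt hderiv hint⟩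

lemma hasPrincipalValue_singleton_of_hasDerivAt (hs : s ∈ Ioo a b)
    (hf : LocallyIntegrableOn f (Icc a b \ {s}))
    (hderiv : ∀ t ∈ Icc a b \ {s}, HasDerivAt F (f t) t) (hF : SymmContinuousAt F s) :
    HasPrincipalValue f {s} a b (F b - F a) := by
  have htrunc : ∀ᶠ ε in nhdsWithin 0 (Ioi 0),
      IntervalIntegrable ((thickening ε {s})ᶜ.indicator f) volume a b ∧
        ∫ t in a..b, (thickening ε {s})ᶜ.indicator f t = F b - F a - (F (s + ε) - F (s - ε)) := by
    filter_upwards [Ioo_mem_nhdsGT (lt_min (sub_pos.2 hs.1) (sub_pos.2 hs.2))] with ε ⟨hε, hεlt⟩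
    obtain ⟨hεa, hεb⟩ := lt_min_iff.1 hεlt
    have hleft : Icc a (s - ε) ⊆ Icc a b \ {s} := by grind
    have hright : Icc (s + ε) b ⊆ Icc a b \ {s} := by grind
    obtain ⟨hint_left, hval_left⟩ := intervalIntegrable_and_integral_eq_sub_of_hasDerivAt
      (by linarith) (hf.mono_set hleft) fun t ht ↦ hderiv t (hleft ht)
    obtain ⟨hint_right, hval_right⟩ := intervalIntegrable_and_integral_eq_sub_of_hasDerivAt
      (by linarith) (hf.mono_set hright) fun t ht ↦ hderiv t (hright ht)
    obtain ⟨hint, hval⟩ := intervalIntegrable_and_integral_indicator_compl_Ioo (by linarith)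
      (by linarith) (by linarith) hint_left hint_right
    rw [thickening_singleton, Real.ball_eq_Ioo]
    refine ⟨hint, ?_⟩
    rw [hval, hval_left, hval_right]
    abel
  have hlim : Tendsto (fun ε ↦ F b - F a - (F (s + ε) - F (s - ε))) (nhdsWithin 0 (Ioi 0))
      (nhds (F b - F a)) := by
    simpa only [sub_zero] using tendsto_const_nhds.sub hF
  exact ⟨htrunc.mono fun ε h ↦ h.1, hlim.congr' (htrunc.mono fun ε h ↦ h.2.symm)⟩

theorem hasPrincipalValue_of_hasDerivAt (hS : S.Finite) (hab : a ≤ b) (ha : a ∉ S) (hb : b ∉ S)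
    (hf : LocallyIntegrableOn f (Icc a b \ S)) (hderiv : ∀ t ∈ Icc a b \ S, HasDerivAt F (f t) t)
    (hF : ∀ s ∈ S ∩ Ioo a b, SymmContinuousAt F s) : HasPrincipalValue f S a b (F b - F a) := by
  induction S, hS using Set.Finite.induction_on generalizing a b with
  | empty =>
    rw [sdiff_empty] at hf hderiv
    obtain ⟨hint, hval⟩ := intervalIntegrable_and_integral_eq_sub_of_hasDerivAt hab hf hderiv
    exact hval ▸ hasPrincipalValue_empty hint
  | @insert s T hsT hT ih =>
    have avoiding {u v : ℝ} (hau : a ≤ u) (huv : u ≤ v) (hvb : v ≤ b) (hs : s ∉ Icc u v)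
        (hu : u ∉ T) (hv : v ∉ T) : HasPrincipalValue f (insert s T) u v (F v - F u) := by
      have hsub : Icc u v \ T ⊆ Icc a b \ insert s T := by grind
      rw [← union_singleton]
      refine (ih huv hu hv (hf.mono_set hsub) (fun t ht ↦ hderiv t (hsub ht)) fun t ht ↦
        hF t ⟨mem_insert_of_mem s ht.1, Ioo_subset_Ioo hau hvb ht.2⟩).union_of_disjoint
          isClosed_singleton ?_
      rwa [uIcc_of_le huv, disjoint_singleton_right]
    by_cases hs : s ∈ Icc a b
    · have hnhds : Ioo a b ∩ Tᶜ ∈ nhds s :=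
        inter_mem (Ioo_mem_nhds (by grind) (by grind)) (hT.isClosed.isOpen_compl.mem_nhds hsT)
      obtain ⟨u, v, -, huv_nhds, hsub⟩ := exists_Icc_mem_subset_of_mem_nhds hnhds
      obtain ⟨hus, hsv⟩ : s ∈ Ioo u v := Icc_mem_nhds_iff.1 huv_nhds
      have huv : u ≤ v := (hus.trans hsv).le
      obtain ⟨⟨hau, -⟩, hu⟩ := hsub (left_mem_Icc.2 huv)
      obtain ⟨⟨-, hvb⟩, hv⟩ := hsub (right_mem_Icc.2 huv)
      have around : HasPrincipalValue f (insert s T) u v (F v - F u) := by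
        have hsub' : Icc u v \ {s} ⊆ Icc a b \ insert s T := by grind
        rw [← singleton_union]
        refine (hasPrincipalValue_singleton_of_hasDerivAt ⟨hus, hsv⟩ (hf.mono_set hsub')
          (fun t ht ↦ hderiv t (hsub' ht)) (hF s (by grind))).union_of_disjoint hT.isClosed ?_
        rw [uIcc_of_le huv, disjoint_left]
        exact fun t ht ↦ (hsub ht).2
      have left := avoiding le_rfl hau.le (by linarith) (by grind) (by grind) hu
      have right := avoiding (by linarith) hvb.le le_rfl (by grind) hv (by grind)
      simpa only [sub_add_sub_cancel'] using (left.add_adjacent around).add_adjacent right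
    · exact avoiding le_rfl hab le_rfl hs (by grind) (by grind)

end PrincipalValue

section EvenPowDiv

variable {n : ℕ} {a b t x : ℝ}

/-- The polynomial `P_{2n-1}(t, x)` in the evaluation of `p.v. ∫ t^(2n) / (x² - t²)`. -/
noncomputable def evenPowDivPoly (n : ℕ) (t x : ℝ) : ℝ :=
  -∑ j ∈ Finset.Icc 1 n, (2 / (2 * (j : ℝ) - 1)) * t ^ (2 * j - 1) * x ^ (2 * (n - j))

/-- A primitive of `t ↦ t^(2n) / (x² - t²)` off `{x, -x}`, odd in `t`. The logarithms are those of
`|t + x|` and `|t - x|`, by the convention `Real.log (-y) = Real.log y`. -/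
noncomputable def evenPowDivPrimitive (n : ℕ) (x t : ℝ) : ℝ :=
  (evenPowDivPoly n t x + x ^ (2 * n - 1) * (Real.log (t + x) - Real.log (t - x))) / 2

lemma sum_Icc_pow_mul_pow_mul_sq_sub_sq {R : Type*} [CommRing R] (n : ℕ) (t x : R) :
    (∑ j ∈ Finset.Icc 1 n, t ^ (2 * (j - 1)) * x ^ (2 * (n - j))) * (t ^ 2 - x ^ 2) =
      t ^ (2 * n) - x ^ (2 * n) := by
  simp only [pow_mul, ← (Commute.all (t ^ 2) (x ^ 2)).geom_sum₂_mul n]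
  rw [← Finset.Ico_add_one_right_eq_Icc, Finset.sum_Ico_eq_sum_range]
  simp only [add_tsub_cancel_right, add_tsub_cancel_left, Nat.sub_sub]

lemma hasDerivAt_evenPowDivPoly (n : ℕ) (t x : ℝ) :
    HasDerivAt (evenPowDivPoly n · x)
      (-2 * ∑ j ∈ Finset.Icc 1 n, t ^ (2 * (j - 1)) * x ^ (2 * (n - j))) t := by
  rw [neg_mul, Finset.mul_sum]
  refine (HasDerivAt.fun_sum fun j hj ↦ ?_).fun_neg
  obtain ⟨i, rfl⟩ := Nat.exists_eq_add_of_le' (Finset.mem_Icc.1 hj).1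
  refine (((hasDerivAt_pow (2 * (i + 1) - 1) t).const_mul _).mul_const _).congr_deriv ?_
  have hexp : 2 * (i + 1) - 1 = 2 * i + 1 := by lia
  have hden : 2 * ((i + 1 : ℕ) : ℝ) - 1 = 2 * i + 1 := by push_cast; ring
  have hne : 2 * (i : ℝ) + 1 ≠ 0 := by positivity
  rw [hexp, hden, Nat.add_sub_cancel, Nat.add_sub_cancel]
  push_cast
  field_simp

lemma hasDerivAt_evenPowDivPrimitive (hn : n ≠ 0) (hadd : t + x ≠ 0) (hsub : t - x ≠ 0) :
    HasDerivAt (evenPowDivPrimitive n x) (t ^ (2 * n) / (x ^ 2 - t ^ 2)) t := by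
  have hlog : HasDerivAt (fun t ↦ Real.log (t + x) - Real.log (t - x))
      (1 / (t + x) - 1 / (t - x)) t :=
    (((hasDerivAt_id t).add_const x).log hadd).sub (((hasDerivAt_id t).sub_const x).log hsub)
  refine (((hasDerivAt_evenPowDivPoly n t x).add (hlog.const_mul _)).div_const 2).congr_deriv ?_
  have hgeom := sum_Icc_pow_mul_pow_mul_sq_sub_sq n t x
  have hpow : x ^ (2 * n - 1) * x = x ^ (2 * n) := pow_sub_one_mul (by lia) x
  have hfactor : x ^ 2 - t ^ 2 = -((t + x) * (t - x)) := by ring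
  rw [hfactor]
  field_simp
  linear_combination -2 * hgeom - 2 * hpow

lemma evenPowDivPrimitive_neg (n : ℕ) (x t : ℝ) :
    evenPowDivPrimitive n x (-t) = -evenPowDivPrimitive n x t := by
  have hpoly : evenPowDivPoly n (-t) x = -evenPowDivPoly n t x := by
    rw [evenPowDivPoly, evenPowDivPoly, neg_inj, ← Finset.sum_neg_distrib]
    refine Finset.sum_congr rfl fun j hj ↦ ?_
    have hodd : Odd (2 * j - 1) := ⟨j - 1, by grind⟩
    rw [hodd.neg_pow]
    ring
  have hlog_add : Real.log (-t + x) = Real.log (t - x) := by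
    rw [← Real.log_neg_eq_log (t - x), neg_sub', sub_neg_eq_add]
  have hlog_sub : Real.log (-t - x) = Real.log (t + x) := by
    rw [← Real.log_neg_eq_log (t + x), neg_add']
  rw [evenPowDivPrimitive, evenPowDivPrimitive, hpoly, hlog_add, hlog_sub]
  ring

lemma symmContinuousAt_evenPowDivPrimitive (n : ℕ) (x s : ℝ) :
    SymmContinuousAt (evenPowDivPrimitive n x) s := by
  unfold evenPowDivPrimitive
  have hpoly : SymmContinuousAt (evenPowDivPoly n · x) s :=
    .of_continuousAt (hasDerivAt_evenPowDivPoly n s x).continuousAt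
  have hlog_add : SymmContinuousAt (fun t ↦ Real.log (t + x)) s := by
    simpa only [sub_neg_eq_add] using symmContinuousAt_log_sub (-x) s
  have hlog := (hlog_add.sub (symmContinuousAt_log_sub x s)).const_smul (x ^ (2 * n - 1))
  simpa only [smul_eq_mul, inv_mul_eq_div] using (hpoly.add hlog).const_smul (2⁻¹ : ℝ)

theorem hasPrincipalValue_even_pow_div_sq_sub_sq (hn : n ≠ 0) (hab : a ≤ b)
    (ha : a ∉ ({x, -x} : Set ℝ)) (hb : b ∉ ({x, -x} : Set ℝ)) :
    HasPrincipalValue (fun t ↦ t ^ (2 * n) / (x ^ 2 - t ^ 2)) {x, -x} a b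
      (evenPowDivPrimitive n x b - evenPowDivPrimitive n x a) := by
  have hfactors {t : ℝ} (ht : t ∉ ({x, -x} : Set ℝ)) : t + x ≠ 0 ∧ t - x ≠ 0 := by grind
  have hcont : ContinuousOn (fun t ↦ t ^ (2 * n) / (x ^ 2 - t ^ 2)) (Icc a b \ {x, -x}) := by
    refine ContinuousOn.div (by fun_prop) (by fun_prop) fun t ht ↦ ?_
    rw [sq_sub_sq, add_comm, ← neg_sub t x]
    exact mul_ne_zero (hfactors ht.2).1 (neg_ne_zero.2 (hfactors ht.2).2)
  have hfin : ({x, -x} : Set ℝ).Finite := toFinite _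
  exact hasPrincipalValue_of_hasDerivAt hfin hab ha hb
    (hcont.locallyIntegrableOn (measurableSet_Icc.diff hfin.measurableSet))
    (fun t ht ↦ hasDerivAt_evenPowDivPrimitive hn (hfactors ht.2).1 (hfactors ht.2).2)
    fun s _ ↦ symmContinuousAt_evenPowDivPrimitive n x s

end EvenPowDiv

theorem pv_integral_even_pow_div_sq_sub_sq_general (n : ℕ) (hn : 1 ≤ n) (N ξ₁ : ℝ)
    (h0 : 0 ≤ N) (hN : |ξ₁| ≠ N) :
    Tendsto (fun ε : ℝ =>
        ∫ t in Ioo (-N) N \ (Ioo (ξ₁ - ε) (ξ₁ + ε) ∪ Ioo (-ξ₁ - ε) (-ξ₁ + ε)),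
          t ^ (2 * n) / (ξ₁ ^ 2 - t ^ 2))
      (nhdsWithin 0 (Ioi 0))
      (nhds ((-∑ j ∈ Finset.Icc 1 n, (2 / (2 * (j : ℝ) - 1)) * N ^ (2 * j - 1) * ξ₁ ^ (2 * (n - j)))
        + ξ₁ ^ (2 * n - 1) * Real.log |(N + ξ₁) / (N - ξ₁)|)) := by
  have hne : N ≠ ξ₁ ∧ N ≠ -ξ₁ := by grind
  have hpv := (hasPrincipalValue_even_pow_div_sq_sub_sq (n := n) (a := -N) (b := N) (x := ξ₁)
    (by lia) (by linarith) (by grind) (by grind)).tendsto_setIntegral_Ioo_sdiff (by linarith)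
  have hval : evenPowDivPrimitive n ξ₁ N - evenPowDivPrimitive n ξ₁ (-N) =
      evenPowDivPoly n N ξ₁ + ξ₁ ^ (2 * n - 1) * Real.log |(N + ξ₁) / (N - ξ₁)| := by
    rw [evenPowDivPrimitive_neg, evenPowDivPrimitive, Real.log_abs,
      Real.log_div (by grind) (by grind)]
    ring
  simpa only [hval, evenPowDivPoly, Metric.thickening_eq_biUnion_ball, Real.ball_eq_Ioo,
    biUnion_pair] using hpv

/-- For `n ≥ 1` and `0 < ξ₁ < N`, the principal value integral
`T_{2n,N}(ξ₁) = p.v.∫_{-N}^{N} t^{2n}/(ξ₁² - t²) dt` exists and equals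
`P_{2n-1}(N, ξ₁) + ξ₁^{2n-1} · ln((N + ξ₁)/(N - ξ₁))`, where
`P_{2n-1}(N, ξ₁) = -∑_{j=1}^{n} (2/(2j-1)) N^{2j-1} ξ₁^{2(n-j)}`. -/
theorem pv_integral_even_pow_div_sq_sub_sq (n : ℕ) (hn : 1 ≤ n) (N ξ₁ : ℝ)
    (h0 : 0 < ξ₁) (hN : ξ₁ < N) :
    Tendsto (fun ε : ℝ =>
        ∫ t in Ioo (-N) N \ (Ioo (ξ₁ - ε) (ξ₁ + ε) ∪ Ioo (-ξ₁ - ε) (-ξ₁ + ε)),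
          t ^ (2 * n) / (ξ₁ ^ 2 - t ^ 2))
      (nhdsWithin 0 (Ioi 0))
      (nhds ((-∑ j ∈ Finset.Icc 1 n, (2 / (2 * (j : ℝ) - 1)) * N ^ (2 * j - 1) * ξ₁ ^ (2 * (n - j)))
        + ξ₁ ^ (2 * n - 1) * Real.log ((N + ξ₁) / (N - ξ₁)))) := by
  simpa only [Real.log_abs] using pv_integral_even_pow_div_sq_sub_sq_general n hn N ξ₁
    (h0.trans hN).le ((abs_of_pos h0).trans_lt hN).ne
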